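/- arXiv:1906.09981 — 2 statements merged into one kernel-verified Lean document; each statement's English description precedes it below -/
import Mathlib

section
/- Theorem 1 (null duality gap). Under the primal–dual setup, assume (i) Slater's condition: there exists a power allocation policy p₀ with ∫ ∑_{i=1}^m p₀_i(x) dμ(x) < P_T (strict inequality), and (ii) the channel-state distribution μ has no atoms (no single point has positive μ-measure). Then the duality gap is null: 𝕡 = 𝕕, i.e. sup over feasible policies of the expected weighted capacity equals inf_{λ≥0} sup over all policies of the Lagrangian. -/
open MeasureTheory Real Filter

noncomputable section

/-- Per-wavelength RoFSO capacity `C(P,h) = log(1 + CNR)` with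
`CNR = α (Ph)² / (β (Ph)² + γ (Ph) + δ)`. -/
def cnrCap (α β γ δ : ℝ) (P h : ℝ) : ℝ :=
  Real.log (1 + α * (P * h) ^ 2 / (β * (P * h) ^ 2 + γ * (P * h) + δ))

/-- A power allocation policy: a measurable map into the box `[0, PS]^m`. -/
def IsPolicy {m : ℕ} (PS : ℝ) (p : (Fin m → ℝ) → Fin m → ℝ) : Prop :=
  Measurable p ∧ ∀ x i, p x i ∈ Set.Icc (0 : ℝ) PS

/-- Expected weighted sum-capacity objective `F(p)`. -/
def objF {m : ℕ} (α β γ δ : ℝ) (ω : Fin m → ℝ) (μ : Measure (Fin m → ℝ))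
    (p : (Fin m → ℝ) → Fin m → ℝ) : ℝ :=
  ∫ x, ∑ i, ω i * cnrCap α β γ δ (p x i) (x i) ∂μ

/-- Expected total power of a policy. -/
def totPow {m : ℕ} (μ : Measure (Fin m → ℝ)) (p : (Fin m → ℝ) → Fin m → ℝ) : ℝ :=
  ∫ x, ∑ i, p x i ∂μ

/-- Lagrangian `L(p, λ) = F(p) + λ (P_T − E[∑ pᵢ])`. -/
def Lagr {m : ℕ} (α β γ δ : ℝ) (ω : Fin m → ℝ) (μ : Measure (Fin m → ℝ)) (PT : ℝ)
    (p : (Fin m → ℝ) → Fin m → ℝ) (lam : ℝ) : ℝ :=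
  objF α β γ δ ω μ p + lam * (PT - totPow μ p)

/-- Dual function `D(λ) = sup_p L(p, λ)` over all policies. -/
def dualFun {m : ℕ} (α β γ δ : ℝ) (ω : Fin m → ℝ) (μ : Measure (Fin m → ℝ)) (PT PS : ℝ)
    (lam : ℝ) : ℝ :=
  sSup {y | ∃ p, IsPolicy PS p ∧ y = Lagr α β γ δ ω μ PT p lam}

/-- Primal value `𝕡 = sup { F(p) : p feasible }`. -/
def primalVal {m : ℕ} (α β γ δ : ℝ) (ω : Fin m → ℝ) (μ : Measure (Fin m → ℝ))
    (PT PS : ℝ) : ℝ :=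
  sSup {y | ∃ p, IsPolicy PS p ∧ totPow μ p ≤ PT ∧ y = objF α β γ δ ω μ p}

/-- Dual value `𝕕 = inf_{λ ≥ 0} D(λ)`. -/
def dualVal {m : ℕ} (α β γ δ : ℝ) (ω : Fin m → ℝ) (μ : Measure (Fin m → ℝ))
    (PT PS : ℝ) : ℝ :=
  sInf {y | ∃ lam ≥ (0 : ℝ), y = dualFun α β γ δ ω μ PT PS lam}

end

/-!
Splicing two policies along a measurable set realises time sharing between them. For an atomless
channel distribution, the set can be chosen so that any integrable density keeps, up to an
arbitrarily small error, a prescribed fraction of its integral (Lyapunov's convexity theorem for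
the closed range): approximate the density by a simple function and divide each of its fibres in
the prescribed proportion. Hence the achievable pairs (expected capacity, expected power) have
convex closure, even though the capacity is not concave in the power. By Slater's condition, a
hyperplane separating this closure from the pairs that beat the primal value within the budget is
not vertical, and its slope is a Lagrange multiplier closing the gap.
-/

noncomputable section

open Set ProbabilityTheory

/-! ### Convexity of closures and Lagrange multipliers -/

theorem convex_closure_of_segment_subset {E : Type*} [AddCommGroup E] [Module ℝ E]
    [TopologicalSpace E] [ContinuousAdd E] [ContinuousConstSMul ℝ E] {s : Set E}
    (hs : ∀ x ∈ s, ∀ y ∈ s, segment ℝ x y ⊆ closure s) : Convex ℝ (closure s) := by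
  intro x hx y hy a b ha hb hab
  rw [← closure_closure]
  exact map_mem_closure₂ (f := fun x y => a • x + b • y) (by fun_prop) hx hy
    fun x hx y hy => hs x hx y hy ⟨a, b, ha, hb, hab, rfl⟩

theorem exists_separating_of_convex_closure {s : Set (ℝ × ℝ)} {c V : ℝ}
    (hs : Convex ℝ (closure s)) (hV : ∀ z ∈ s, z.2 ≤ c → z.1 ≤ V) :
    ∃ v w b : ℝ, (∀ y > V, ∀ t < c, v * y + w * t < b) ∧ ∀ z ∈ s, b ≤ v * z.1 + w * z.2 := by
  have hopen : IsOpen (Ioi V ×ˢ Iio c) := isOpen_Ioi.prod isOpen_Iio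
  have hdisj : Disjoint (Ioi V ×ˢ Iio c) s :=
    disjoint_left.2 fun z hz hzs => (hV z hzs (le_of_lt hz.2)).not_gt hz.1
  obtain ⟨f, b, hlt, hle⟩ := geometric_hahn_banach_open ((convex_Ioi V).prod (convex_Iio c))
    hopen hs (hdisj.closure_right hopen)
  have hf : ∀ z : ℝ × ℝ, f z = f (1, 0) * z.1 + f (0, 1) * z.2 := fun z => by
    calc f z = f (z.1 • (1, 0) + z.2 • (0, 1)) := by simp
      _ = f (1, 0) * z.1 + f (0, 1) * z.2 := by
        rw [map_add, map_smul, map_smul, smul_eq_mul, smul_eq_mul, mul_comm, mul_comm z.2]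
  exact ⟨f (1, 0), f (0, 1), b, fun y hy t ht => hf (y, t) ▸ hlt (y, t) ⟨hy, ht⟩,
    fun z hz => hf z ▸ hle z (subset_closure hz)⟩

theorem exists_multiplier_of_convex_closure {s : Set (ℝ × ℝ)} {c V : ℝ}
    (hs : Convex ℝ (closure s)) (hV : ∀ z ∈ s, z.2 ≤ c → z.1 ≤ V) (hslater : ∃ z ∈ s, z.2 < c) :
    ∃ lam ≥ (0 : ℝ), ∀ z ∈ s, z.1 + lam * (c - z.2) ≤ V := by
  obtain ⟨v, w, b, hlt, hle⟩ := exists_separating_of_convex_closure hs hV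
  obtain ⟨z₀, hz₀, hz₀c⟩ := hslater
  have hz₀V := hV z₀ hz₀ hz₀c.le
  have hv : v < 0 := by
    have h := (hlt (V + 1) (lt_add_one V) z₀.2 hz₀c).trans_le (hle z₀ hz₀)
    nlinarith
  have hw : 0 ≤ w := by
    by_contra! hw
    set t := z₀.2 - v * (V + 1 - z₀.1) / w with ht
    have htc : t < c := by
      have : 0 ≤ v * (V + 1 - z₀.1) / w :=
        div_nonneg_of_nonpos (mul_nonpos_of_nonpos_of_nonneg hv.le (by linarith)) hw.le
      linarith
    have h := (hlt (V + 1) (lt_add_one V) t htc).trans_le (hle z₀ hz₀)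
    rw [ht, mul_sub, mul_div_cancel₀ _ hw.ne] at h
    linarith
  have hcorner : v * V + w * c ≤ b := by
    have hmem : (V, c) ∈ closure (Ioi V ×ˢ Iio c) := by simp [closure_prod_eq]
    have hclosed : IsClosed {z : ℝ × ℝ | v * z.1 + w * z.2 ≤ b} :=
      isClosed_le (by fun_prop) continuous_const
    exact closure_minimal (fun z hz => (hlt z.1 hz.1 z.2 hz.2).le) hclosed hmem
  refine ⟨w / -v, div_nonneg hw (neg_nonneg.2 hv.le), fun z hz => ?_⟩
  rw [← le_sub_iff_add_le', div_mul_eq_mul_div, div_le_iff₀ (neg_pos.2 hv)]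
  linarith [hle z hz]

/-- The problem of maximising `payoff p` over the admissible decisions `p` whose `cost p` does not
exceed `budget`. -/
structure BudgetProgram (X : Type*) where
  admissible : Set X
  payoff : X → ℝ
  cost : X → ℝ
  budget : ℝ

namespace BudgetProgram

variable {X : Type*} (P : BudgetProgram X)

/-- The optimal value of the program, to be read as such only when some admissible decision is
within the budget and the payoffs of these decisions are bounded above: otherwise `sSup` is `0`. -/
def primalValue : ℝ :=
  sSup {y | ∃ p, p ∈ P.admissible ∧ P.cost p ≤ P.budget ∧ y = P.payoff p}

/-- The payoff penalised, at the price `lam`, for exceeding the budget. -/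
def lagrangian (p : X) (lam : ℝ) : ℝ :=
  P.payoff p + lam * (P.budget - P.cost p)

/-- The optimal value of the Lagrangian relaxation at the price `lam`. -/
def dualFunction (lam : ℝ) : ℝ :=
  sSup {y | ∃ p, p ∈ P.admissible ∧ y = P.lagrangian p lam}

/-- The best upper bound on the primal value given by a Lagrangian relaxation. -/
def dualValue : ℝ :=
  sInf {y | ∃ lam ≥ (0 : ℝ), y = P.dualFunction lam}

/-- The achievable pairs (payoff, cost). -/
def achievable : Set (ℝ × ℝ) :=
  (fun p => (P.payoff p, P.cost p)) '' P.admissible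

variable {P}

theorem payoff_le_primalValue (hpayoff : BddAbove (P.payoff '' P.admissible)) {p : X}
    (hp : p ∈ P.admissible) (hcost : P.cost p ≤ P.budget) : P.payoff p ≤ P.primalValue := by
  refine le_csSup (hpayoff.mono ?_) ⟨p, hp, hcost, rfl⟩
  rintro _ ⟨q, hq, -, rfl⟩
  exact mem_image_of_mem _ hq

theorem lagrangian_le_dualFunction (hpayoff : BddAbove (P.payoff '' P.admissible))
    (hcost : BddBelow (P.cost '' P.admissible)) {lam : ℝ} (hlam : 0 ≤ lam) {p : X}
    (hp : p ∈ P.admissible) : P.lagrangian p lam ≤ P.dualFunction lam := by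
  obtain ⟨M, hM⟩ := hpayoff
  obtain ⟨B, hB⟩ := hcost
  refine le_csSup ⟨M + lam * (P.budget - B), ?_⟩ ⟨p, hp, rfl⟩
  rintro _ ⟨q, hq, rfl⟩
  unfold lagrangian
  gcongr
  exacts [hM (mem_image_of_mem _ hq), hB (mem_image_of_mem _ hq)]

theorem primalValue_le_dualFunction (hpayoff : BddAbove (P.payoff '' P.admissible))
    (hcost : BddBelow (P.cost '' P.admissible))
    (hfeasible : ∃ p ∈ P.admissible, P.cost p ≤ P.budget) {lam : ℝ} (hlam : 0 ≤ lam) :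
    P.primalValue ≤ P.dualFunction lam := by
  obtain ⟨p₀, hp₀, hp₀c⟩ := hfeasible
  refine csSup_le ⟨_, p₀, hp₀, hp₀c, rfl⟩ ?_
  rintro _ ⟨p, hp, hpc, rfl⟩
  calc P.payoff p ≤ P.lagrangian p lam :=
        le_add_of_nonneg_right (mul_nonneg hlam (sub_nonneg.2 hpc))
    _ ≤ P.dualFunction lam := lagrangian_le_dualFunction hpayoff hcost hlam hp

theorem exists_dualFunction_le_primalValue (hpayoff : BddAbove (P.payoff '' P.admissible))
    (hslater : ∃ p ∈ P.admissible, P.cost p < P.budget)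
    (hconvex : Convex ℝ (closure P.achievable)) :
    ∃ lam ≥ (0 : ℝ), P.dualFunction lam ≤ P.primalValue := by
  obtain ⟨p₀, hp₀, hp₀c⟩ := hslater
  obtain ⟨lam, hlam, hle⟩ := exists_multiplier_of_convex_closure hconvex
    (forall_mem_image.2 fun p hp => payoff_le_primalValue hpayoff hp)
    ⟨_, mem_image_of_mem _ hp₀, hp₀c⟩
  refine ⟨lam, hlam, csSup_le ⟨_, p₀, hp₀, rfl⟩ ?_⟩
  rintro _ ⟨p, hp, rfl⟩
  exact hle _ (mem_image_of_mem _ hp)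

theorem primalValue_eq_dualValue (hpayoff : BddAbove (P.payoff '' P.admissible))
    (hcost : BddBelow (P.cost '' P.admissible))
    (hslater : ∃ p ∈ P.admissible, P.cost p < P.budget)
    (hconvex : Convex ℝ (closure P.achievable)) : P.primalValue = P.dualValue := by
  have weak : P.primalValue ∈ lowerBounds {y | ∃ lam ≥ (0 : ℝ), y = P.dualFunction lam} := by
    rintro _ ⟨lam, hlam, rfl⟩
    exact primalValue_le_dualFunction hpayoff hcost
      (hslater.imp fun _ h => ⟨h.1, h.2.le⟩) hlam
  obtain ⟨lam, hlam, strong⟩ := exists_dualFunction_le_primalValue hpayoff hslater hconvex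
  exact le_antisymm (le_csInf ⟨_, lam, hlam, rfl⟩ weak)
    (csInf_le_of_le ⟨_, weak⟩ ⟨lam, hlam, rfl⟩ strong)

end BudgetProgram

/-! ### Dividing an atomless measure -/

theorem continuous_cdf (ν : Measure ℝ) [IsProbabilityMeasure ν] [NullSingletonClass ν] :
    Continuous (cdf ν) := by
  refine continuous_iff_continuousAt.2 fun t => ?_
  rw [(monotone_cdf ν).continuousAt_iff_leftLim_eq_rightLim, (cdf ν).rightLim_eq]
  refine ((monotone_cdf ν).leftLim_le le_rfl).antisymm ?_
  have hjump : (cdf ν).measure {t} = 0 := by rw [measure_cdf, measure_singleton]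
  rwa [StieltjesFunction.measure_singleton, ENNReal.ofReal_eq_zero, sub_nonpos] at hjump

theorem exists_measurable_injective_real (Ω : Type*) [MeasurableSpace Ω]
    [MeasurableSpace.CountablySeparated Ω] : ∃ f : Ω → ℝ, Measurable f ∧ Function.Injective f := by
  obtain ⟨f, hf, hf_inj⟩ := MeasurableSpace.measurable_injection_nat_bool_of_countablySeparated Ω
  obtain ⟨g, hg⟩ := exists_measurableEmbedding_real (ℕ → Bool)
  exact ⟨g ∘ f, hg.measurable.comp hf, hg.injective.comp hf_inj⟩

section Atomless

variable {Ω : Type*} [MeasurableSpace Ω] [MeasurableSpace.CountablySeparated Ω]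

theorem exists_measurableSet_measureReal_eq (P : Measure Ω) [IsProbabilityMeasure P]
    [NullSingletonClass P] {θ : ℝ} (hθ : θ ∈ Icc (0 : ℝ) 1) :
    ∃ s, MeasurableSet s ∧ P.real s = θ := by
  rcases hθ.1.eq_or_lt with rfl | hθ₀
  · exact ⟨∅, MeasurableSet.empty, measureReal_empty⟩
  rcases hθ.2.eq_or_lt with rfl | hθ₁
  · exact ⟨univ, MeasurableSet.univ, probReal_univ⟩
  obtain ⟨f, hf, hf_inj⟩ := exists_measurable_injective_real Ω
  have : IsProbabilityMeasure (P.map f) := Measure.isProbabilityMeasure_map hf.aemeasurable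
  have : NullSingletonClass (P.map f) := ⟨fun t => by
    rw [Measure.map_apply hf (measurableSet_singleton t)]
    exact (subsingleton_singleton.preimage hf_inj).measure_zero P⟩
  obtain ⟨t, -, ht⟩ := isPreconnected_univ.intermediate_value_Ioo (by simp) (by simp)
    (continuous_cdf (P.map f)).continuousOn (tendsto_cdf_atBot _) (tendsto_cdf_atTop _)
    ⟨hθ₀, hθ₁⟩
  refine ⟨f ⁻¹' Iic t, hf measurableSet_Iic, ?_⟩
  rw [← map_measureReal_apply hf measurableSet_Iic, ← cdf_eq_real, ht]

variable {μ : Measure Ω} [NullSingletonClass μ] {θ : ℝ}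

theorem exists_measurableSet_subset_measureReal_eq {A : Set Ω} (hA : MeasurableSet A)
    (hθ : θ ∈ Icc (0 : ℝ) 1) : ∃ s ⊆ A, MeasurableSet s ∧ μ.real s = θ * μ.real A := by
  -- This case includes `μ A = ∞`, where `μ.real A` is `0`.
  by_cases hμA : μ.real A = 0
  · exact ⟨∅, empty_subset A, MeasurableSet.empty, by simp [hμA]⟩
  obtain ⟨hne_zero, hne_top⟩ := ENNReal.toReal_ne_zero.1 hμA
  have := cond_isProbabilityMeasure_of_finite hne_zero hne_top
  have : NullSingletonClass μ[|A] := ⟨fun x => cond_absolutelyContinuous (measure_singleton x)⟩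
  obtain ⟨s, hs, hsθ⟩ := exists_measurableSet_measureReal_eq μ[|A] hθ
  refine ⟨A ∩ s, inter_subset_left, hA.inter hs, ?_⟩
  rw [← hsθ, measureReal_def μ[|A], cond_apply hA, ENNReal.toReal_mul, ENNReal.toReal_inv,
    ← measureReal_def, ← measureReal_def, mul_comm, mul_inv_cancel_left₀ hμA]

variable {E : Type*} [NormedAddCommGroup E] [NormedSpace ℝ E] [CompleteSpace E]

theorem exists_setIntegral_simpleFunc_eq_smul {f : SimpleFunc Ω E} (hf : Integrable f μ)
    (hθ : θ ∈ Icc (0 : ℝ) 1) :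
    ∃ s, MeasurableSet s ∧ ∫ x in s, f x ∂μ = θ • ∫ x, f x ∂μ := by
  choose S hS_sub hS_meas hS_real using fun y =>
    exists_measurableSet_subset_measureReal_eq (μ := μ) (f.measurableSet_fiber y) hθ
  have hfiber : ∀ y ∈ f.range, f ⁻¹' {y} ∩ ⋃ z ∈ f.range, S z = S y := by
    intro y hy
    refine Subset.antisymm ?_ (subset_inter (hS_sub y) (subset_biUnion_of_mem (u := S) hy))
    rintro x ⟨rfl, hx⟩
    obtain ⟨z, -, hxz⟩ := mem_iUnion₂.1 hx
    rwa [← show f x = z from hS_sub z hxz] at hxz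
  refine ⟨⋃ y ∈ f.range, S y, f.range.measurableSet_biUnion fun y _ => hS_meas y, ?_⟩
  rw [f.integral_eq_sum hf.restrict, f.integral_eq_sum hf, Finset.smul_sum]
  refine Finset.sum_congr rfl fun y hy => ?_
  rw [measureReal_restrict_apply (f.measurableSet_fiber y), hfiber y hy, hS_real, mul_smul]

/-- An approximate form of Lyapunov's convexity theorem, valid in infinite dimension. -/
theorem smul_integral_mem_closure_setIntegral {g : Ω → E} (hg : Integrable g μ)
    (hθ : θ ∈ Icc (0 : ℝ) 1) :
    θ • ∫ x, g x ∂μ ∈ closure ((fun s => ∫ x in s, g x ∂μ) '' {s | MeasurableSet s}) := by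
  refine Metric.mem_closure_iff.2 fun ε hε => ?_
  obtain ⟨f, hgf, hf⟩ := (memLp_one_iff_integrable.2 hg).exists_simpleFunc_eLpNorm_sub_lt
    ENNReal.one_ne_top (ENNReal.ofReal_pos.2 (half_pos hε)).ne'
  have hfi := memLp_one_iff_integrable.1 hf
  obtain ⟨s, hs, hs_eq⟩ := exists_setIntegral_simpleFunc_eq_smul hfi hθ
  have herror : ∫ x, ‖g x - f x‖ ∂μ < ε / 2 := by
    rw [integral_norm_eq_lintegral_enorm
      (hg.aestronglyMeasurable.fun_sub hfi.aestronglyMeasurable)]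
    rw [eLpNorm_one_eq_lintegral_enorm] at hgf
    exact ENNReal.toReal_lt_of_lt_ofReal hgf
  refine ⟨_, mem_image_of_mem _ hs, ?_⟩
  calc dist (θ • ∫ x, g x ∂μ) (∫ x in s, g x ∂μ)
      = ‖θ • ∫ x, (g x - f x) ∂μ - ∫ x in s, (g x - f x) ∂μ‖ := by
        rw [dist_eq_norm, integral_sub hg hfi, integral_sub hg.restrict hfi.restrict, hs_eq]
        congr 1
        module
    _ ≤ ‖θ • ∫ x, (g x - f x) ∂μ‖ + ‖∫ x in s, (g x - f x) ∂μ‖ := norm_sub_le _ _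
    _ ≤ ∫ x, ‖g x - f x‖ ∂μ + ∫ x, ‖g x - f x‖ ∂μ := by
        gcongr
        · rw [norm_smul, Real.norm_of_nonneg hθ.1]
          exact (mul_le_of_le_one_left (norm_nonneg _) hθ.2).trans
            (norm_integral_le_integral_norm _)
        · exact (norm_integral_le_integral_norm _).trans (setIntegral_le_integral
            (hg.sub hfi).norm (ae_of_all μ fun x => norm_nonneg _))
    _ < ε := by linarith

end Atomless

/-! ### Allocation of a budget across random states -/

section Allocation

variable {Ω A : Type*} [MeasurableSpace Ω]

open Classical in
theorem integral_comp_piecewise {E : Type*} [NormedAddCommGroup E] [NormedSpace ℝ E]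
    {μ : Measure Ω} {Φ : Ω → A → E} {p q : Ω → A} (hp : Integrable (fun x => Φ x (p x)) μ)
    (hq : Integrable (fun x => Φ x (q x)) μ) {s : Set Ω} (hs : MeasurableSet s) :
    ∫ x, Φ x (s.piecewise p q x) ∂μ =
      ∫ x, Φ x (q x) ∂μ + ∫ x in s, (Φ x (p x) - Φ x (q x)) ∂μ := by
  have hsplice : ∀ x, Φ x (s.piecewise p q x) =
      s.piecewise (fun x => Φ x (p x)) (fun x => Φ x (q x)) x := fun x => by
    by_cases hx : x ∈ s <;> simp [hx]
  simp only [hsplice]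
  rw [integral_piecewise hs hp.integrableOn hq.integrableOn,
    integral_sub hp.restrict hq.restrict, ← integral_add_compl hs hq]
  abel

variable [MeasurableSpace A]

/-- The measurable decision rules that take, in each state `x`, a decision in `K x`. -/
def decisionRules (K : Ω → Set A) : Set (Ω → A) :=
  {p | Measurable p ∧ ∀ x, p x ∈ K x}

open Classical in
theorem piecewise_mem_decisionRules {K : Ω → Set A} {p q : Ω → A} (hp : p ∈ decisionRules K)
    (hq : q ∈ decisionRules K) {s : Set Ω} (hs : MeasurableSet s) :
    s.piecewise p q ∈ decisionRules K :=
  ⟨hp.1.piecewise hs hq.1, fun x => by by_cases hx : x ∈ s <;> simp [hx, hp.2 x, hq.2 x]⟩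

theorem convex_closure_integral_decisionRules {E : Type*} [NormedAddCommGroup E] [NormedSpace ℝ E]
    [CompleteSpace E] [MeasurableSpace.CountablySeparated Ω] {μ : Measure Ω}
    [NullSingletonClass μ] {K : Ω → Set A} {Φ : Ω → A → E}
    (hΦ : ∀ p ∈ decisionRules K, Integrable (fun x => Φ x (p x)) μ) :
    Convex ℝ (closure ((fun p => ∫ x, Φ x (p x) ∂μ) '' decisionRules K)) := by
  classical
  refine convex_closure_of_segment_subset ?_
  rintro _ ⟨q, hq, rfl⟩ _ ⟨p, hp, rfl⟩
  rw [segment_eq_image']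
  rintro _ ⟨θ, hθ, rfl⟩
  have hsplit := smul_integral_mem_closure_setIntegral ((hΦ p hp).sub (hΦ q hq)) hθ
  simp only [Pi.sub_apply] at hsplit
  rw [integral_sub (hΦ p hp) (hΦ q hq)] at hsplit
  refine map_mem_closure (f := fun v => ∫ x, Φ x (q x) ∂μ + v) (by fun_prop) hsplit ?_
  rintro _ ⟨s, hs, rfl⟩
  exact ⟨s.piecewise p q, piecewise_mem_decisionRules hp hq hs,
    integral_comp_piecewise (hΦ p hp) (hΦ q hq) hs⟩

/-- The program of choosing, in a random state of law `μ`, decisions constrained by `K` so as to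
maximise the expectation of the payoff `u` while the expectation of the cost `r` stays within the
budget `c`. -/
def allocationProgram (μ : Measure Ω) (K : Ω → Set A) (u r : Ω → A → ℝ) (c : ℝ) :
    BudgetProgram (Ω → A) where
  admissible := decisionRules K
  payoff p := ∫ x, u x (p x) ∂μ
  cost p := ∫ x, r x (p x) ∂μ
  budget := c

theorem null_duality_gap_general [MeasurableSpace.CountablySeparated Ω] {μ : Measure Ω}
    [NullSingletonClass μ] {K : Ω → Set A} {u r : Ω → A → ℝ} {c : ℝ}
    (hu : ∀ p ∈ decisionRules K, Integrable (fun x => u x (p x)) μ)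
    (hr : ∀ p ∈ decisionRules K, Integrable (fun x => r x (p x)) μ)
    (hu_bdd : BddAbove ((fun p => ∫ x, u x (p x) ∂μ) '' decisionRules K))
    (hr_bdd : BddBelow ((fun p => ∫ x, r x (p x) ∂μ) '' decisionRules K))
    (hslater : ∃ p ∈ decisionRules K, ∫ x, r x (p x) ∂μ < c) :
    (allocationProgram μ K u r c).primalValue = (allocationProgram μ K u r c).dualValue := by
  refine BudgetProgram.primalValue_eq_dualValue hu_bdd hr_bdd hslater ?_
  convert! convex_closure_integral_decisionRules (Φ := fun x a => (u x a, r x a))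
    fun p hp => (hu p hp).prodMk (hr p hp) using 2
  exact image_congr fun p hp => (integral_pair (hu p hp) (hr p hp)).symm

end Allocation

/-! ### Power allocation -/

theorem cnrCap_mem_Icc {α β γ δ P h : ℝ} (hα : 0 ≤ α) (hβ : 0 < β) (hγ : 0 ≤ γ) (hδ : 0 < δ)
    (hP : 0 ≤ P) (hh : 0 ≤ h) :
    cnrCap α β γ δ P h ∈ Icc 0 (Real.log (1 + α / β)) := by
  have hPh : 0 ≤ P * h := mul_nonneg hP hh
  have hcnr : 0 ≤ α * (P * h) ^ 2 / (β * (P * h) ^ 2 + γ * (P * h) + δ) := by positivity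
  refine ⟨Real.log_nonneg (by linarith), Real.log_le_log (by linarith) ?_⟩
  gcongr 1 + ?_
  rw [div_le_div_iff₀ (by positivity) hβ]
  nlinarith [mul_nonneg hα (mul_nonneg hγ hPh), mul_nonneg hα hδ.le]

namespace IsPolicy

variable {m : ℕ} {α β γ δ PS : ℝ} {ω : Fin m → ℝ} {μ : Measure (Fin m → ℝ)}
  {p : (Fin m → ℝ) → Fin m → ℝ}

theorem measurable_power (hp : IsPolicy PS p) (i : Fin m) : Measurable fun x => p x i :=
  (measurable_pi_apply i).comp hp.1

theorem integrable_sum_power [IsFiniteMeasure μ] (hp : IsPolicy PS p) :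
    Integrable (fun x => ∑ i, p x i) μ :=
  integrable_finsetSum _ fun i _ => Integrable.of_mem_Icc 0 PS (hp.measurable_power i).aemeasurable
    (ae_of_all μ fun x => hp.2 x i)

theorem totPow_nonneg (hp : IsPolicy PS p) : 0 ≤ totPow μ p :=
  integral_nonneg fun x => Finset.sum_nonneg fun i _ => (hp.2 x i).1

theorem ae_cnrCap_mem_Icc (hα : 0 ≤ α) (hβ : 0 < β) (hγ : 0 ≤ γ) (hδ : 0 < δ)
    (hsupp : ∀ᵐ x ∂μ, ∀ i, 0 ≤ x i) (hp : IsPolicy PS p) (i : Fin m) :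
    ∀ᵐ x ∂μ, cnrCap α β γ δ (p x i) (x i) ∈ Icc 0 (Real.log (1 + α / β)) :=
  hsupp.mono fun x hx => cnrCap_mem_Icc hα hβ hγ hδ (hp.2 x i).1 (hx i)

theorem integrable_cnrCap [IsFiniteMeasure μ] (hα : 0 ≤ α) (hβ : 0 < β) (hγ : 0 ≤ γ) (hδ : 0 < δ)
    (hsupp : ∀ᵐ x ∂μ, ∀ i, 0 ≤ x i) (hp : IsPolicy PS p) (i : Fin m) :
    Integrable (fun x => cnrCap α β γ δ (p x i) (x i)) μ := by
  have hpi := hp.measurable_power i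
  exact Integrable.of_mem_Icc _ _ (by unfold cnrCap; fun_prop)
    (hp.ae_cnrCap_mem_Icc hα hβ hγ hδ hsupp i)

theorem integrable_sum_mul_cnrCap [IsFiniteMeasure μ] (hα : 0 ≤ α) (hβ : 0 < β) (hγ : 0 ≤ γ)
    (hδ : 0 < δ) (hsupp : ∀ᵐ x ∂μ, ∀ i, 0 ≤ x i) (hp : IsPolicy PS p) :
    Integrable (fun x => ∑ i, ω i * cnrCap α β γ δ (p x i) (x i)) μ :=
  integrable_finsetSum _ fun i _ =>
    (hp.integrable_cnrCap hα hβ hγ hδ hsupp i).const_mul (ω i)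

theorem objF_le [IsProbabilityMeasure μ] (hα : 0 ≤ α) (hβ : 0 < β) (hγ : 0 ≤ γ) (hδ : 0 < δ)
    (hsupp : ∀ᵐ x ∂μ, ∀ i, 0 ≤ x i) (hp : IsPolicy PS p) :
    objF α β γ δ ω μ p ≤ ∑ i, |ω i| * Real.log (1 + α / β) := by
  have hle : ∀ᵐ x ∂μ, ∑ i, ω i * cnrCap α β γ δ (p x i) (x i) ≤
      ∑ i, |ω i| * Real.log (1 + α / β) := by
    filter_upwards [ae_all_iff.2 (hp.ae_cnrCap_mem_Icc hα hβ hγ hδ hsupp)] with x hx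
    exact Finset.sum_le_sum fun i _ =>
      mul_le_mul (le_abs_self _) (hx i).2 (hx i).1 (abs_nonneg _)
  simpa [objF] using
    integral_mono_ae (hp.integrable_sum_mul_cnrCap hα hβ hγ hδ hsupp) (integrable_const _) hle

end IsPolicy

theorem bddAbove_objF {m : ℕ} {α β γ δ : ℝ} (hα : 0 ≤ α) (hβ : 0 < β) (hγ : 0 ≤ γ) (hδ : 0 < δ)
    {μ : Measure (Fin m → ℝ)} [IsProbabilityMeasure μ] (hsupp : ∀ᵐ x ∂μ, ∀ i, 0 ≤ x i)
    (ω : Fin m → ℝ) (PS : ℝ) : BddAbove (objF α β γ δ ω μ '' {p | IsPolicy PS p}) :=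
  ⟨_, forall_mem_image.2 fun _ hp => IsPolicy.objF_le hα hβ hγ hδ hsupp hp⟩

theorem bddBelow_totPow {m : ℕ} (μ : Measure (Fin m → ℝ)) (PS : ℝ) :
    BddBelow (totPow μ '' {p | IsPolicy PS p}) :=
  ⟨0, forall_mem_image.2 fun _ hp => IsPolicy.totPow_nonneg hp⟩

end

/-- **Theorem 1 (null duality gap).** Under Slater's condition and atomlessness of the
channel-state distribution, the primal value equals the dual value: `𝕡 = 𝕕`. -/
theorem null_duality_gap {m : ℕ} (hm : 1 ≤ m)
    (α β γ δ : ℝ) (hα : 0 < α) (hβ : 0 < β) (hγ : 0 < γ) (hδ : 0 < δ)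
    (μ : Measure (Fin m → ℝ)) [IsProbabilityMeasure μ]
    (hsupp : ∀ᵐ x ∂μ, ∀ i, 0 ≤ x i)
    (ω : Fin m → ℝ) (hω : ∀ i, 0 ≤ ω i)
    (PT PS : ℝ) (hPT : 0 < PT) (hPS : 0 < PS)
    (hslater : ∃ p₀, IsPolicy PS p₀ ∧ totPow μ p₀ < PT)
    (hatoms : ∀ x : Fin m → ℝ, μ {x} = 0) :
    primalVal α β γ δ ω μ PT PS = dualVal α β γ δ ω μ PT PS := by
  have : NullSingletonClass μ := ⟨hatoms⟩
  have gap := null_duality_gap_general (μ := μ) (c := PT)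
    (K := fun _ => {a : Fin m → ℝ | ∀ i, a i ∈ Set.Icc 0 PS})
    (u := fun x a => ∑ i, ω i * cnrCap α β γ δ (a i) (x i)) (r := fun _ a => ∑ i, a i)
    (fun _ hp => IsPolicy.integrable_sum_mul_cnrCap hα.le hβ hγ.le hδ hsupp hp)
    (fun _ hp => IsPolicy.integrable_sum_power hp)
    (bddAbove_objF hα.le hβ hγ.le hδ hsupp ω PS) (bddBelow_totPow μ PS) hslater
  exact gap
end

section
/- Pointwise evaluation of the dual function. Under the primal–dual setup, for every λ ≥ 0 the supremum of the Lagrangian over measurable policies is attained by pointwise maximization: D(λ) = λ·P_T + ∫ ( sup_{q ∈ [0,P_S]^m} ∑_{i=1}^m ( ω_i C(q_i, x_i) − λ q_i ) ) dμ(x); in particular the map x ↦ sup_{q ∈ [0,P_S]^m} ∑_i (ω_i C(q_i, x_i) − λ q_i) is measurable and μ-integrable, and there exists a measurable policy attaining the supremum defining D(λ). -/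
open MeasureTheory Real Filter

noncomputable section

/-- Pointwise maximized Lagrangian integrand:
`x ↦ sup_{q ∈ [0,P_S]^m} ∑ᵢ (ωᵢ C(qᵢ, xᵢ) − λ qᵢ)`. -/
def innerSup {m : ℕ} (α β γ δ : ℝ) (ω : Fin m → ℝ) (PS lam : ℝ)
    (x : Fin m → ℝ) : ℝ :=
  sSup {y | ∃ q : Fin m → ℝ, (∀ i, q i ∈ Set.Icc (0 : ℝ) PS) ∧
    y = ∑ i, (ω i * cnrCap α β γ δ (q i) (x i) - lam * q i)}

end

/-!
For a policy `p`, linearity turns the Lagrangian into `lam * PT + ∫ u(x, p x) dμ`, where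
`u(x, q) = ∑ i, (ω i * C(q i, x i) - lam * q i)` is separable in the coordinates of `q`. On the
nonnegative orthant `u` is continuous, so the largest maximizer of each summand over `[0, PS]` is
an upper semicontinuous, hence measurable, function of the channel state. These maximizers form a
policy that attains the pointwise supremum almost everywhere, hence also the supremum defining the
dual function.

Off the nonnegative orthant the denominator of the carrier-to-noise ratio may vanish, and the
measurability of the pointwise supremum needs another argument: the capacity is a function of
`q i * x i` with countably many discontinuities, so countably many measurable choices of `q` give
values that are dense in the range of `u(x, ·)`, for every `x`.
-/

section MeasurableMaximization

open Function

lemma csSup_eq_csSup_of_subset_of_subset_closure {R : Type*} [TopologicalSpace R]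
    [ConditionallyCompleteLinearOrder R] [ClosedIicTopology R] {s t : Set R} (hst : s ⊆ t)
    (hts : t ⊆ closure s) : sSup s = sSup t := by
  rcases s.eq_empty_or_nonempty with rfl | hs
  · have ht : t = ∅ := by simpa only [closure_empty, Set.subset_empty_iff] using hts
    rw [ht]
  by_cases hbdd : BddAbove s
  · have hlub : IsLUB t (sSup s) :=
      (isLUB_iff_of_subset_of_subset_closure hst hts).1 (isLUB_csSup hs hbdd)
    exact (hlub.csSup_eq (hs.mono hst)).symm
  · rw [csSup_of_not_bddAbove hbdd, csSup_of_not_bddAbove fun h ↦ hbdd (h.mono hst)]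

lemma measurable_csSup_of_subset_closure_range {X ι R : Type*} [MeasurableSpace X] [Countable ι]
    [ConditionallyCompleteLinearOrder R] [TopologicalSpace R] [OrderTopology R]
    [SecondCountableTopology R] [MeasurableSpace R] [BorelSpace R] {S : X → Set R} {g : ι → X → R}
    (hg : ∀ n, Measurable (g n)) (hmem : ∀ x n, g n x ∈ S x)
    (hdense : ∀ x, S x ⊆ closure (Set.range fun n ↦ g n x)) :
    Measurable fun x ↦ sSup (S x) := by
  have hsup (x : X) : ⨆ n, g n x = sSup (S x) :=
    csSup_eq_csSup_of_subset_of_subset_closure (Set.range_subset_iff.2 (hmem x)) (hdense x)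
  simpa only [hsup] using Measurable.iSup hg

lemma isMaxOn_sum_pi {ι M : Type*} {Y : ι → Type*} [Fintype ι] [AddCommMonoid M] [Preorder M]
    [IsOrderedAddMonoid M] {f : ∀ i, Y i → M} {s : ∀ i, Set (Y i)} {q : ∀ i, Y i}
    (h : ∀ i, IsMaxOn (f i) (s i) (q i)) :
    IsMaxOn (fun r ↦ ∑ i, f i (r i)) (Set.univ.pi s) q :=
  fun _ hr ↦ Finset.sum_le_sum fun i _ ↦ h i (hr i trivial)

variable {X Y Z : Type*} [TopologicalSpace X] [TopologicalSpace Y] [TopologicalSpace Z]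

lemma isClosed_setOfPred_isMaxOn [Preorder Z] [OrderClosedTopology Z] {f : X → Y → Z}
    (hf : Continuous (uncurry f)) (K : Set Y) :
    IsClosed {z : X × Y | IsMaxOn (f z.1) K z.2} := by
  simp only [isMaxOn_iff, Set.ofPred_forall]
  exact isClosed_biInter fun r _ ↦
    isClosed_le (hf.comp (continuous_fst.prodMk continuous_const)) hf

/-- The maximizer chosen is the largest one: the states where it is at least `c` form the projection
of a closed set along a compact factor, so it is upper semicontinuous. -/
lemma exists_measurable_isMaxOn [MeasurableSpace X] [OpensMeasurableSpace X]
    [ConditionallyCompleteLinearOrder Y] [OrderTopology Y] [SecondCountableTopology Y]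
    [MeasurableSpace Y] [BorelSpace Y] [LinearOrder Z] [OrderClosedTopology Z] {f : X → Y → Z}
    (hf : Continuous (uncurry f)) {K : Set Y} (hK : IsCompact K) (hne : K.Nonempty) :
    ∃ s : X → Y, Measurable s ∧ ∀ x, s x ∈ K ∧ IsMaxOn (f x) K (s x) := by
  let A (x : X) : Set Y := {q ∈ K | IsMaxOn (f x) K q}
  have hclosed := isClosed_setOfPred_isMaxOn hf K
  have hcompact (x : X) : IsCompact (A x) :=
    hK.inter_right (hclosed.preimage (Continuous.prodMk_right x))
  have hmem (x : X) : sSup (A x) ∈ A x :=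
    (hcompact x).sSup_mem (hK.exists_isMaxOn hne (hf.uncurry_left x).continuousOn)
  refine ⟨fun x ↦ sSup (A x), measurable_of_Ici fun c ↦ ?_, hmem⟩
  have hpreimage : (fun x ↦ sSup (A x)) ⁻¹' Set.Ici c =
      Prod.fst '' {z : X × K | c ≤ z.2 ∧ IsMaxOn (f z.1) K z.2} := by
    ext x
    constructor
    · intro hc
      exact ⟨(x, ⟨sSup (A x), (hmem x).1⟩), ⟨hc, (hmem x).2⟩, rfl⟩
    · rintro ⟨⟨x, q⟩, ⟨hc, hq⟩, rfl⟩
      exact hc.trans (le_csSup (hcompact x).bddAbove ⟨q.2, hq⟩)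
  have : CompactSpace K := isCompact_iff_compactSpace.1 hK
  rw [hpreimage]
  refine (isClosedMap_fst_of_compactSpace _ (IsClosed.inter ?_ ?_)).measurableSet
  · exact isClosed_le continuous_const (continuous_subtype_val.comp continuous_snd)
  · exact hclosed.preimage (continuous_id.prodMap continuous_subtype_val)

end MeasurableMaximization

section NetUtility

/-- Net utility of a single channel in state `h` at power `q`, where `φ` gives the rate as a
function of the received power `q * h`, `w` is the weight of the rate and `lam` the price of
power. -/
def channelUtility (φ : ℝ → ℝ) (w lam h q : ℝ) : ℝ :=
  w * φ (q * h) - lam * q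

/-- Total net utility of parallel channels with states `x` and powers `q`: the integrand of the
Lagrangian, up to the constant contributed by the power budget. -/
def netUtility {ι : Type*} [Fintype ι] (φ : ℝ → ℝ) (ω : ι → ℝ) (lam : ℝ) (x q : ι → ℝ) : ℝ :=
  ∑ i, channelUtility φ (ω i) lam (x i) (q i)

/-- Powers in `[a, b]`, as functions of the channel state `h`, whose utilities are dense among
those of all powers in `[a, b]`: the rationals, and the powers `u / h` at which the received power
is a discontinuity `u` of `φ`, all projected to `[a, b]`. The junk value `u / 0 = 0` is harmless,
since the utility is continuous in the power for `h = 0`. -/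
noncomputable def candidatePower (φ : ℝ → ℝ) {a b : ℝ} (hab : a ≤ b) :
    ℚ ⊕ {u // ¬ContinuousAt φ u} → ℝ → Set.Icc a b
  | Sum.inl t, _ => Set.projIcc a b hab t
  | Sum.inr u, h => Set.projIcc a b hab (u / h)

variable {φ : ℝ → ℝ}

lemma measurable_candidatePower {a b : ℝ} (hab : a ≤ b) (n : ℚ ⊕ {u // ¬ContinuousAt φ u}) :
    Measurable (candidatePower φ hab n) := by
  rcases n with t | u
  · exact measurable_const
  · exact continuous_projIcc.measurable.comp (measurable_id.const_div _)

lemma channelUtility_mem_closure_candidatePower (w lam h : ℝ) {a b q : ℝ} (hab : a ≤ b)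
    (hq : q ∈ Set.Icc a b) :
    channelUtility φ w lam h q ∈
      closure (Set.range fun n ↦ channelUtility φ w lam h (candidatePower φ hab n h)) := by
  have hproj : (Set.projIcc a b hab q : ℝ) = q := congrArg _ (Set.projIcc_of_mem hab hq)
  by_cases hcont : ContinuousAt (fun r ↦ φ (r * h)) q
  · have hutility : ContinuousAt (channelUtility φ w lam h) (Set.projIcc a b hab q) := by
      rw [hproj]
      exact (hcont.const_mul w).sub (continuousAt_id.const_mul lam)
    have hcomp := hutility.comp (f := fun t ↦ (Set.projIcc a b hab t : ℝ))
      (continuous_subtype_val.comp continuous_projIcc).continuousAt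
    have hmem := mem_closure_image hcomp (Rat.denseRange_cast (𝕜 := ℝ) q)
    rw [Function.comp_apply, hproj] at hmem
    refine closure_mono ?_ hmem
    rintro _ ⟨_, ⟨t, rfl⟩, rfl⟩
    exact ⟨Sum.inl t, rfl⟩
  · have hh : h ≠ 0 := by
      rintro rfl
      simp only [mul_zero, continuousAt_const, not_true_eq_false] at hcont
    have hdisc : ¬ContinuousAt φ (q * h) := fun hφ ↦
      hcont (hφ.comp (f := fun r ↦ r * h) (continuous_mul_const h).continuousAt)
    refine subset_closure ⟨Sum.inr ⟨q * h, hdisc⟩, ?_⟩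
    simp only [candidatePower, mul_div_cancel_right₀ _ hh, hproj]

variable {ι : Type*} [Fintype ι]

lemma netUtility_mem_closure_candidatePower (ω : ι → ℝ) (lam : ℝ) (x : ι → ℝ) {a b q : ι → ℝ}
    (hab : ∀ i, a i ≤ b i) (hq : ∀ i, q i ∈ Set.Icc (a i) (b i)) :
    netUtility φ ω lam x q ∈ closure (Set.range fun n : ι → ℚ ⊕ {u // ¬ContinuousAt φ u} ↦
      netUtility φ ω lam x fun i ↦ candidatePower φ (hab i) (n i) (x i)) := by
  have hpi := mem_closure_pi (I := Set.univ) |>.2 fun i _ ↦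
    channelUtility_mem_closure_candidatePower (φ := φ) (ω i) lam (x i) (hab i) (hq i)
  refine map_mem_closure (f := fun y : ι → ℝ ↦ ∑ i, y i) (by fun_prop) hpi fun y hy ↦ ?_
  choose n hn using fun i ↦ hy i (Set.mem_univ i)
  exact ⟨n, Finset.sum_congr rfl fun i _ ↦ hn i⟩

lemma measurable_netUtility {Ω : Type*} [MeasurableSpace Ω] (hφ : Measurable φ) (ω : ι → ℝ)
    (lam : ℝ) {x q : Ω → ι → ℝ} (hx : Measurable x) (hq : Measurable q) :
    Measurable fun z ↦ netUtility φ ω lam (x z) (q z) := by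
  unfold netUtility channelUtility
  fun_prop

lemma measurable_sSup_netUtility (hφ : Measurable φ) (hdisc : {u | ¬ContinuousAt φ u}.Countable)
    (ω : ι → ℝ) (lam : ℝ) {a b : ι → ℝ} (hab : ∀ i, a i ≤ b i) :
    Measurable fun x ↦
      sSup (netUtility φ ω lam x '' Set.univ.pi fun i ↦ Set.Icc (a i) (b i)) := by
  have : Countable {u // ¬ContinuousAt φ u} := hdisc.to_subtype
  refine measurable_csSup_of_subset_closure_range
    (g := fun (n : ι → ℚ ⊕ {u // ¬ContinuousAt φ u}) x ↦
      netUtility φ ω lam x fun i ↦ candidatePower φ (hab i) (n i) (x i))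
    (fun n ↦ ?_) (fun x n ↦ ⟨_, fun i _ ↦ (candidatePower φ (hab i) (n i) (x i)).2, rfl⟩) ?_
  · refine measurable_netUtility hφ ω lam measurable_id (measurable_pi_lambda _ fun i ↦ ?_)
    exact ((measurable_candidatePower (hab i) (n i)).comp (measurable_pi_apply i)).subtype_val
  · rintro x _ ⟨q, hq, rfl⟩
    exact netUtility_mem_closure_candidatePower ω lam x hab fun i ↦ hq i trivial

lemma exists_measurable_isMaxOn_channelUtility (hφ : ContinuousOn φ (Set.Ici 0)) (w lam : ℝ)
    {a b : ℝ} (ha : 0 ≤ a) (hab : a ≤ b) :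
    ∃ s : ℝ → ℝ, Measurable s ∧ ∀ h, s h ∈ Set.Icc a b ∧
      (0 ≤ h → IsMaxOn (channelUtility φ w lam h) (Set.Icc a b) (s h)) := by
  let ψ (u : ℝ) : ℝ := φ (max u 0)
  have hψ : Continuous ψ := hφ.comp_continuous (by fun_prop) fun u ↦ le_max_right u 0
  have hjoint : Continuous (Function.uncurry (channelUtility ψ w lam)) := by
    unfold Function.uncurry channelUtility
    fun_prop
  obtain ⟨s, hs, hmax⟩ :=
    exists_measurable_isMaxOn hjoint isCompact_Icc (Set.nonempty_Icc.2 hab)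
  refine ⟨s, hs, fun h ↦ ⟨(hmax h).1, fun hh ↦ ?_⟩⟩
  have heq : Set.EqOn (channelUtility ψ w lam h) (channelUtility φ w lam h) (Set.Icc a b) :=
    fun q hq ↦ by
      simp only [channelUtility, ψ, max_eq_left (mul_nonneg (ha.trans hq.1) hh)]
  exact (hmax h).2.congr (heq.eventuallyEq_of_mem (mem_principal_self _)) (heq (hmax h).1)

lemma exists_measurable_isMaxOn_netUtility (hφ : ContinuousOn φ (Set.Ici 0)) (ω : ι → ℝ)
    (lam : ℝ) {a b : ι → ℝ} (ha : ∀ i, 0 ≤ a i) (hab : ∀ i, a i ≤ b i) :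
    ∃ p : (ι → ℝ) → ι → ℝ, Measurable p ∧ (∀ x i, p x i ∈ Set.Icc (a i) (b i)) ∧
      ∀ x, (∀ i, 0 ≤ x i) →
        IsMaxOn (netUtility φ ω lam x) (Set.univ.pi fun i ↦ Set.Icc (a i) (b i)) (p x) := by
  choose s hs hmax using fun i ↦
    exists_measurable_isMaxOn_channelUtility hφ (ω i) lam (ha i) (hab i)
  exact ⟨fun x i ↦ s i (x i),
    measurable_pi_lambda _ fun i ↦ (hs i).comp (measurable_pi_apply i),
    fun x i ↦ (hmax i (x i)).1, fun x hx ↦ isMaxOn_sum_pi fun i ↦ (hmax i (x i)).2 (hx i)⟩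

end NetUtility

section Rate

/-- The capacity as a function of the received power `u = P * h`. -/
noncomputable def cnrRate (α β γ δ u : ℝ) : ℝ :=
  Real.log (1 + α * u ^ 2 / (β * u ^ 2 + γ * u + δ))

variable {α β γ δ : ℝ}

lemma measurable_cnrRate : Measurable (cnrRate α β γ δ) := by
  unfold cnrRate
  fun_prop

lemma continuousAt_cnrRate {u : ℝ} (hden : β * u ^ 2 + γ * u + δ ≠ 0)
    (hnum : (α + β) * u ^ 2 + γ * u + δ ≠ 0) : ContinuousAt (cnrRate α β γ δ) u := by
  have harg : 1 + α * u ^ 2 / (β * u ^ 2 + γ * u + δ) =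
      ((α + β) * u ^ 2 + γ * u + δ) / (β * u ^ 2 + γ * u + δ) := by
    rw [one_add_div hden]
    ring
  refine ContinuousAt.log ?_ (harg ▸ div_ne_zero hnum hden)
  exact continuousAt_const.add (ContinuousAt.div (by fun_prop) (by fun_prop) hden)

lemma finite_setOfPred_quadratic_eq_zero {R : Type*} [CommRing R] [IsDomain R] (a b : R) {c : R}
    (hc : c ≠ 0) : {u : R | a * u ^ 2 + b * u + c = 0}.Finite := by
  open Polynomial in
  let P : R[X] := C a * X ^ 2 + C b * X + C c
  have hP : P ≠ 0 := fun h ↦ hc (by simpa [P] using congrArg (eval 0) h)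
  simpa [P] using finite_setOfPred_isRoot hP

lemma countable_setOfPred_not_continuousAt_cnrRate (hδ : δ ≠ 0) :
    {u | ¬ContinuousAt (cnrRate α β γ δ) u}.Countable := by
  refine ((finite_setOfPred_quadratic_eq_zero β γ hδ).union
    (finite_setOfPred_quadratic_eq_zero (α + β) γ hδ)).countable.mono fun u hu ↦ ?_
  by_contra! hroot
  simp only [Set.mem_union, Set.mem_ofPred_eq, not_or] at hroot
  exact hu (continuousAt_cnrRate hroot.1 hroot.2)

lemma continuousOn_cnrRate (hα : 0 ≤ α) (hβ : 0 ≤ β) (hγ : 0 ≤ γ) (hδ : 0 < δ) :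
    ContinuousOn (cnrRate α β γ δ) (Set.Ici 0) := fun u (hu : 0 ≤ u) ↦
  (continuousAt_cnrRate (by positivity) (by positivity)).continuousWithinAt

lemma cnrRate_nonneg (hα : 0 ≤ α) (hβ : 0 ≤ β) (hγ : 0 ≤ γ) (hδ : 0 ≤ δ) {u : ℝ} (hu : 0 ≤ u) :
    0 ≤ cnrRate α β γ δ u :=
  Real.log_nonneg (le_add_of_nonneg_right (by positivity))

lemma cnrRate_le (hα : 0 ≤ α) (hβ : 0 < β) (hγ : 0 ≤ γ) (hδ : 0 < δ) {u : ℝ} (hu : 0 ≤ u) :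
    cnrRate α β γ δ u ≤ Real.log (1 + α / β) := by
  refine Real.log_le_log (by positivity) ?_
  gcongr 1 + ?_
  rw [div_le_div_iff₀ (by positivity) hβ]
  have : 0 ≤ α * (γ * u + δ) := by positivity
  linarith

end Rate

section Dual

variable {m : ℕ} {α β γ δ PS : ℝ} {p : (Fin m → ℝ) → Fin m → ℝ}

lemma innerSup_eq_sSup_image (ω : Fin m → ℝ) (lam : ℝ) (x : Fin m → ℝ) :
    innerSup α β γ δ ω PS lam x =
      sSup (netUtility (cnrRate α β γ δ) ω lam x '' Set.univ.pi fun _ ↦ Set.Icc 0 PS) := by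
  refine congrArg sSup (Set.ext fun y ↦ exists_congr fun q ↦ ?_)
  rw [Set.mem_univ_pi, eq_comm (a := y)]
  rfl

lemma measurable_innerSup (hδ : δ ≠ 0) (ω : Fin m → ℝ) (hPS : 0 ≤ PS) (lam : ℝ) :
    Measurable (innerSup α β γ δ ω PS lam) := by
  simpa only [← innerSup_eq_sSup_image] using measurable_sSup_netUtility measurable_cnrRate
    (countable_setOfPred_not_continuousAt_cnrRate (α := α) (β := β) (γ := γ) hδ) ω lam
    fun _ : Fin m ↦ hPS

lemma innerSup_eq_of_isMaxOn {ω : Fin m → ℝ} {lam : ℝ} {x q : Fin m → ℝ}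
    (hq : ∀ i, q i ∈ Set.Icc 0 PS)
    (hmax : IsMaxOn (netUtility (cnrRate α β γ δ) ω lam x)
      (Set.univ.pi fun _ ↦ Set.Icc 0 PS) q) :
    innerSup α β γ δ ω PS lam x = netUtility (cnrRate α β γ δ) ω lam x q := by
  rw [innerSup_eq_sSup_image]
  exact IsGreatest.csSup_eq ⟨⟨q, fun i _ ↦ hq i, rfl⟩, Set.forall_mem_image.2 hmax⟩

variable {μ : Measure (Fin m → ℝ)} [IsFiniteMeasure μ]

lemma IsPolicy.integrable (hp : IsPolicy PS p) (i : Fin m) : Integrable (fun x ↦ p x i) μ := by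
  refine Integrable.of_mem_Icc 0 PS ?_ (ae_of_all _ fun x ↦ hp.2 x i)
  exact ((measurable_pi_apply i).comp hp.1).aemeasurable

lemma IsPolicy.integrable_cnrRate (hp : IsPolicy PS p) (hα : 0 ≤ α) (hβ : 0 < β) (hγ : 0 ≤ γ)
    (hδ : 0 < δ) (hsupp : ∀ᵐ x ∂μ, ∀ i, 0 ≤ x i) (i : Fin m) :
    Integrable (fun x ↦ cnrRate α β γ δ (p x i * x i)) μ := by
  refine Integrable.of_mem_Icc 0 (Real.log (1 + α / β)) ?_ ?_
  · have hreceived : Measurable fun x ↦ p x i * x i :=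
      ((measurable_pi_apply i).comp hp.1).mul (measurable_pi_apply i)
    exact (measurable_cnrRate.comp hreceived).aemeasurable
  · filter_upwards [hsupp] with x hx
    have hreceived : 0 ≤ p x i * x i := mul_nonneg (hp.2 x i).1 (hx i)
    exact ⟨cnrRate_nonneg hα hβ.le hγ hδ.le hreceived, cnrRate_le hα hβ hγ hδ hreceived⟩

lemma IsPolicy.integrable_netUtility (hp : IsPolicy PS p) (hα : 0 ≤ α) (hβ : 0 < β) (hγ : 0 ≤ γ)
    (hδ : 0 < δ) (hsupp : ∀ᵐ x ∂μ, ∀ i, 0 ≤ x i) (ω : Fin m → ℝ) (lam : ℝ) :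
    Integrable (fun x ↦ netUtility (cnrRate α β γ δ) ω lam x (p x)) μ :=
  integrable_finsetSum _ fun i _ ↦
    ((hp.integrable_cnrRate hα hβ hγ hδ hsupp i).const_mul _).sub ((hp.integrable i).const_mul _)

lemma IsPolicy.Lagr_eq (hp : IsPolicy PS p) (hα : 0 ≤ α) (hβ : 0 < β) (hγ : 0 ≤ γ) (hδ : 0 < δ)
    (hsupp : ∀ᵐ x ∂μ, ∀ i, 0 ≤ x i) (ω : Fin m → ℝ) (PT lam : ℝ) :
    Lagr α β γ δ ω μ PT p lam =
      lam * PT + ∫ x, netUtility (cnrRate α β γ δ) ω lam x (p x) ∂μ := by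
  have hrate : Integrable (fun x ↦ ∑ i, ω i * cnrRate α β γ δ (p x i * x i)) μ :=
    integrable_finsetSum _ fun i _ ↦ (hp.integrable_cnrRate hα hβ hγ hδ hsupp i).const_mul _
  have hpower : Integrable (fun x ↦ ∑ i, p x i) μ :=
    integrable_finsetSum _ fun i _ ↦ hp.integrable i
  have hsplit : ∫ x, netUtility (cnrRate α β γ δ) ω lam x (p x) ∂μ =
      objF α β γ δ ω μ p - lam * totPow μ p := by
    simp only [netUtility, channelUtility, Finset.sum_sub_distrib, ← Finset.mul_sum]
    rw [integral_sub hrate (hpower.const_mul lam), integral_const_mul]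
    rfl
  rw [hsplit, Lagr]
  ring

lemma IsPolicy.dualFun_eq_Lagr (hp : IsPolicy PS p) (hα : 0 ≤ α) (hβ : 0 < β) (hγ : 0 ≤ γ)
    (hδ : 0 < δ) (hsupp : ∀ᵐ x ∂μ, ∀ i, 0 ≤ x i) {ω : Fin m → ℝ} {lam : ℝ}
    (hmax : ∀ᵐ x ∂μ, IsMaxOn (netUtility (cnrRate α β γ δ) ω lam x)
      (Set.univ.pi fun _ ↦ Set.Icc 0 PS) (p x)) (PT : ℝ) :
    dualFun α β γ δ ω μ PT PS lam = Lagr α β γ δ ω μ PT p lam := by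
  refine IsGreatest.csSup_eq ⟨⟨p, hp, rfl⟩, ?_⟩
  rintro _ ⟨r, hr, rfl⟩
  rw [hp.Lagr_eq hα hβ hγ hδ hsupp, hr.Lagr_eq hα hβ hγ hδ hsupp]
  gcongr 1
  refine integral_mono_ae (hr.integrable_netUtility hα hβ hγ hδ hsupp ω lam)
    (hp.integrable_netUtility hα hβ hγ hδ hsupp ω lam) ?_
  filter_upwards [hmax] with x hx using hx fun i _ ↦ hr.2 x i

theorem dual_pointwise_evaluation_general (hα : 0 ≤ α) (hβ : 0 < β) (hγ : 0 ≤ γ) (hδ : 0 < δ)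
    (hsupp : ∀ᵐ x ∂μ, ∀ i, 0 ≤ x i) (ω : Fin m → ℝ) (PT : ℝ) (hPS : 0 ≤ PS) (lam : ℝ) :
    Measurable (innerSup α β γ δ ω PS lam) ∧
    Integrable (innerSup α β γ δ ω PS lam) μ ∧
    dualFun α β γ δ ω μ PT PS lam = lam * PT + ∫ x, innerSup α β γ δ ω PS lam x ∂μ ∧
    ∃ p, IsPolicy PS p ∧ Lagr α β γ δ ω μ PT p lam = dualFun α β γ δ ω μ PT PS lam := by
  obtain ⟨p, hmeas, hbox, hmax⟩ := exists_measurable_isMaxOn_netUtility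
    (continuousOn_cnrRate hα hβ.le hγ hδ) ω lam (fun _ ↦ le_rfl) fun _ ↦ hPS
  have hp : IsPolicy PS p := ⟨hmeas, hbox⟩
  have hmax_ae := hsupp.mono hmax
  have hinner : innerSup α β γ δ ω PS lam =ᵐ[μ]
      fun x ↦ netUtility (cnrRate α β γ δ) ω lam x (p x) :=
    hmax_ae.mono fun x ↦ innerSup_eq_of_isMaxOn (hbox x)
  have hdual := hp.dualFun_eq_Lagr hα hβ hγ hδ hsupp hmax_ae PT
  refine ⟨measurable_innerSup hδ.ne' ω hPS lam,
    (hp.integrable_netUtility hα hβ hγ hδ hsupp ω lam).congr hinner.symm, ?_, p, hp, hdual.symm⟩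
  rw [hdual, hp.Lagr_eq hα hβ hγ hδ hsupp, integral_congr_ae hinner]

end Dual

/-- **Pointwise evaluation of the dual function.** For every `λ ≥ 0`,
`D(λ) = λ P_T + ∫ sup_{q ∈ [0,P_S]^m} ∑ᵢ (ωᵢ C(qᵢ, xᵢ) − λ qᵢ) dμ(x)`;
the pointwise supremum is measurable and integrable, and the supremum defining
`D(λ)` is attained by some measurable policy. -/
theorem dual_pointwise_evaluation {m : ℕ} (hm : 1 ≤ m)
    (α β γ δ : ℝ) (hα : 0 < α) (hβ : 0 < β) (hγ : 0 < γ) (hδ : 0 < δ)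
    (μ : Measure (Fin m → ℝ)) [IsProbabilityMeasure μ]
    (hsupp : ∀ᵐ x ∂μ, ∀ i, 0 ≤ x i)
    (ω : Fin m → ℝ) (hω : ∀ i, 0 ≤ ω i)
    (PT PS : ℝ) (hPT : 0 < PT) (hPS : 0 < PS)
    (lam : ℝ) (hlam : 0 ≤ lam) :
    Measurable (innerSup α β γ δ ω PS lam) ∧
    Integrable (innerSup α β γ δ ω PS lam) μ ∧
    dualFun α β γ δ ω μ PT PS lam
      = lam * PT + ∫ x, innerSup α β γ δ ω PS lam x ∂μ ∧
    ∃ p, IsPolicy PS p ∧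
      Lagr α β γ δ ω μ PT p lam = dualFun α β γ δ ω μ PT PS lam :=
  dual_pointwise_evaluation_general hα.le hβ hγ.le hδ hsupp ω PT hPS.le lam
end
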